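/- For any two distinct colours c, q ∈ Fin k with S(c,c) nonempty, if X is chosen uniformly at random from S(c,c), then H(X,q) is uniformly distributed over S(q,c). -/

import Mathlib

/-- The disagreement graph `Q_{σ(v),q}`: the set of vertices `x` for which there is a
path `v = w₀, …, w_t = x` in `G` all of whose vertices receive colour `σ v` or `q`. -/
def disagreeSet {V : Type*} {k : ℕ} (G : SimpleGraph V) (v : V)
    (σ : V → Fin k) (q : Fin k) : Set V :=
  {x | ∃ p : G.Walk v x, ∀ w ∈ p.support, σ w = σ v ∨ σ w = q}

open Classical in
/-- The `q`-switching `H(σ,q)`: exchange the colours `σ v` and `q` on the disagreement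
graph, leaving all other vertices unchanged. -/
noncomputable def switchColour {V : Type*} {k : ℕ} (G : SimpleGraph V) (v : V)
    (σ : V → Fin k) (q : Fin k) : V → Fin k := fun x =>
  if x ∈ disagreeSet G v σ q then
    if σ x = σ v then q else if σ x = q then σ v else σ x
  else σ x

/-- `S(c,c)` as a finset: the proper colourings with `σ v = c`, `σ u = c` whose
disagreement graph `Q_{c,q}` does not contain `u`. -/
noncomputable def SccF {V : Type*} [Fintype V] {k : ℕ} (G : SimpleGraph V) (v u : V)
    (c q : Fin k) : Finset (V → Fin k) :=
  (Set.toFinite {σ : V → Fin k |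
    (∀ x y, G.Adj x y → σ x ≠ σ y) ∧ σ v = c ∧ σ u = c ∧
      u ∉ disagreeSet G v σ q}).toFinset

/-- `S(q,c)` as a finset: the proper colourings with `σ v = q`, `σ u = c` whose
disagreement graph `Q_{q,c}` does not contain `u`. -/
noncomputable def SqcF {V : Type*} [Fintype V] {k : ℕ} (G : SimpleGraph V) (v u : V)
    (c q : Fin k) : Finset (V → Fin k) :=
  (Set.toFinite {σ : V → Fin k |
    (∀ x y, G.Adj x y → σ x ≠ σ y) ∧ σ v = q ∧ σ u = c ∧
      u ∉ disagreeSet G v σ c}).toFinset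

theorem switch_mem_iff {V : Type*} {k : ℕ} (G : SimpleGraph V) (v : V)
    (σ : V → Fin k) (q : Fin k) (x : V) :
    (switchColour G v σ q x = q ∨ switchColour G v σ q x = σ v) ↔ (σ x = σ v ∨ σ x = q) := by
  unfold switchColour
  split_ifs <;> grind

theorem switch_self {V : Type*} {k : ℕ} (G : SimpleGraph V) (v : V)
    (σ : V → Fin k) (q : Fin k) : switchColour G v σ q v = q := by
  have h : v ∈ disagreeSet G v σ q := ⟨SimpleGraph.Walk.nil, by simp⟩
  simp [switchColour, h]

theorem disagree_switch {V : Type*} {k : ℕ} (G : SimpleGraph V) (v : V)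
    (σ : V → Fin k) (q : Fin k) :
    disagreeSet G v (switchColour G v σ q) (σ v) = disagreeSet G v σ q := by
  ext x
  simp only [disagreeSet, Set.mem_ofPred_eq]
  rw [switch_self]
  simp only [switch_mem_iff]

theorem switch_switch {V : Type*} {k : ℕ} (G : SimpleGraph V) (v : V)
    (σ : V → Fin k) (q : Fin k) :
    switchColour G v (switchColour G v σ q) (σ v) = σ := by
  ext1 x
  have h1 := disagree_switch G v σ q
  have h2 := switch_self G v σ q
  have h3 : switchColour G v σ q x = _ := rfl
  conv_rhs at h3 => unfold switchColour
  generalize switchColour G v σ q = τ at h1 h2 h3 ⊢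
  unfold switchColour
  rw [h1, h2]
  split_ifs at h3 ⊢ <;> grind

theorem disagree_colour {V : Type*} {k : ℕ} (G : SimpleGraph V) (v : V)
    (σ : V → Fin k) (q : Fin k) {x : V} (hx : x ∈ disagreeSet G v σ q) :
    σ x = σ v ∨ σ x = q := by
  obtain ⟨p, hp⟩ := hx
  exact hp x p.end_mem_support

theorem disagree_step {V : Type*} {k : ℕ} (G : SimpleGraph V) (v : V)
    (σ : V → Fin k) (q : Fin k) {x y : V} (hx : x ∈ disagreeSet G v σ q)
    (h : G.Adj x y) (hy : σ y = σ v ∨ σ y = q) : y ∈ disagreeSet G v σ q := by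
  obtain ⟨p, hp⟩ := hx
  refine ⟨p.concat h, fun w hw => ?_⟩
  rw [SimpleGraph.Walk.support_concat] at hw
  simp at hw
  rcases hw with hw | rfl
  · exact hp w hw
  · exact hy

theorem switch_proper {V : Type*} {k : ℕ} (G : SimpleGraph V) (v : V)
    (σ : V → Fin k) (q : Fin k) (hσ : ∀ x y, G.Adj x y → σ x ≠ σ y) (x y : V)
    (h : G.Adj x y) : switchColour G v σ q x ≠ switchColour G v σ q y := by
  have h0 := hσ x y h
  have h1 := fun hx => disagree_step G v σ q (x := x) (y := y) hx h
  have h2 := fun hx => disagree_step G v σ q (x := y) (y := x) hx h.symm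
  have h3 := fun hx => disagree_colour G v σ q (x := x) hx
  have h4 := fun hx => disagree_colour G v σ q (x := y) hx
  unfold switchColour
  split_ifs <;> grind

theorem switch_off {V : Type*} {k : ℕ} (G : SimpleGraph V) (v : V)
    (σ : V → Fin k) (q : Fin k) {u : V} (hu : u ∉ disagreeSet G v σ q) :
    switchColour G v σ q u = σ u := by
  simp [switchColour, hu]

theorem map_scc {V : Type*} [Fintype V] {k : ℕ} (G : SimpleGraph V) (v u : V)
    (c q : Fin k) (σ : V → Fin k) (h : σ ∈ SccF G v u c q) :
    switchColour G v σ q ∈ SqcF G v u c q ∧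
      switchColour G v (switchColour G v σ q) c = σ := by
  simp only [SccF, SqcF, Set.Finite.mem_toFinset, Set.mem_ofPred_eq] at h ⊢
  obtain ⟨hp, rfl, hu, hd⟩ := h
  refine ⟨⟨switch_proper G v σ q hp, switch_self G v σ q, ?_, ?_⟩, switch_switch G v σ q⟩
  · rw [switch_off G v σ q hd, hu]
  · rwa [disagree_switch]

theorem map_sqc {V : Type*} [Fintype V] {k : ℕ} (G : SimpleGraph V) (v u : V)
    (c q : Fin k) (σ : V → Fin k) (h : σ ∈ SqcF G v u c q) :
    switchColour G v σ c ∈ SccF G v u c q ∧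
      switchColour G v (switchColour G v σ c) q = σ := by
  simp only [SccF, SqcF, Set.Finite.mem_toFinset, Set.mem_ofPred_eq] at h ⊢
  obtain ⟨hp, rfl, hu, hd⟩ := h
  refine ⟨⟨switch_proper G v σ c hp, switch_self G v σ c, ?_, ?_⟩, switch_switch G v σ c⟩
  · rw [switch_off G v σ c hd, hu]
  · rwa [disagree_switch]

/-- for distinct colours `c q` with `S(c,c)` nonempty, if `X` is uniform
on `S(c,c)` then `H(X,q)` is uniform on `S(q,c)`. -/
theorem stmt3 {V : Type*} [Fintype V] {k : ℕ} (hk : 0 < k)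
    (G : SimpleGraph V) (v u : V) (huv : u ≠ v) (hadj : ¬ G.Adj v u)
    (c q : Fin k) (hcq : c ≠ q) (hne : (SccF G v u c q).Nonempty) :
    ∃ hne' : (SqcF G v u c q).Nonempty,
      PMF.map (fun σ => switchColour G v σ q) (PMF.uniformOfFinset (SccF G v u c q) hne)
        = PMF.uniformOfFinset (SqcF G v u c q) hne' := by
  have hne' : (SqcF G v u c q).Nonempty := by
    obtain ⟨σ, h⟩ := hne
    exact ⟨_, (map_scc G v u c q σ h).1⟩
  refine ⟨hne', ?_⟩
  have hcard : (SccF G v u c q).card = (SqcF G v u c q).card :=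
    Finset.card_nbij' (fun σ => switchColour G v σ q) (fun σ => switchColour G v σ c)
      (fun σ h => (map_scc G v u c q σ h).1) (fun σ h => (map_sqc G v u c q σ h).1)
      (fun σ h => (map_scc G v u c q σ h).2) (fun σ h => (map_sqc G v u c q σ h).2)
  classical
  ext1 τ
  rw [PMF.map_apply, tsum_eq_single (switchColour G v τ c)]
  · by_cases hτ : τ ∈ SqcF G v u c q
    · obtain ⟨h1, h2⟩ := map_sqc G v u c q τ hτ
      rw [PMF.uniformOfFinset_apply_of_mem _ hτ, PMF.uniformOfFinset_apply_of_mem _ h1, h2, hcard]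
      simp
    · rw [PMF.uniformOfFinset_apply_of_notMem _ hτ]
      split_ifs with h
      · apply PMF.uniformOfFinset_apply_of_notMem
        intro h1
        apply hτ
        rw [h]
        exact (map_scc G v u c q _ h1).1
      · rfl
  · intro σ hσ
    split_ifs with h
    · apply PMF.uniformOfFinset_apply_of_notMem
      intro h1
      apply hσ
      rw [h]
      exact (map_scc G v u c q _ h1).2.symm
    · rfl
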